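/- arXiv:1808.06291 — 3 statements merged into one kernel-verified Lean document; each statement's English description precedes it below -/
import Mathlib

section
/- Let λ be a bipartition (2-partition) of n. Then w(λ) = w(λ'), i.e. the weight of λ equals the weight of its conjugate bipartition. Equivalently, avoiding the factor 1/2: 2·(Σ_{s=1}^{2} c_{Q_s}(λ)) − Σ_{f∈K^×} (c_f(λ) − c_{qf}(λ))² = 2·(Σ_{s=1}^{2} c_{Q_s}(λ')) − Σ_{f∈K^×} (c_f(λ') − c_{qf}(λ'))². -/
open scoped BigOperators

/-- `lam : ℕ → ℕ` encodes a partition: row `i` (0-indexed) has `lam i` boxes.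
It must be non-increasing with finitely many nonzero parts. -/
def IsPartitionFun (lam : ℕ → ℕ) : Prop :=
  (∀ ⦃i j : ℕ⦄, i ≤ j → lam j ≤ lam i) ∧ ∃ N : ℕ, ∀ i, N ≤ i → lam i = 0

/-- The size `|λ|` of a partition. -/
noncomputable def partSize (lam : ℕ → ℕ) : ℕ := ∑ᶠ i, lam i

/-- The conjugate partition: `(conjParts lam) j = #{i : lam i ≥ j+1}`
(column `j`, 0-indexed, has as many boxes as there are rows of length `> j`). -/
noncomputable def conjParts (lam : ℕ → ℕ) : ℕ → ℕ :=
  fun j => Set.ncard {i : ℕ | j < lam i}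

/-- An `r`-partition (multipartition) is an `r`-tuple of partitions. -/
def IsMultipartition {r : ℕ} (lam : Fin r → ℕ → ℕ) : Prop :=
  ∀ k, IsPartitionFun (lam k)

/-- The size of an `r`-partition. -/
noncomputable def msize {r : ℕ} (lam : Fin r → ℕ → ℕ) : ℕ :=
  ∑ k : Fin r, partSize (lam k)

/-- The conjugate of an `r`-partition `λ = (λ⁽¹⁾, …, λ⁽ʳ⁾)` is
`λ' = (λ⁽ʳ⁾', …, λ⁽¹⁾')`. -/
noncomputable def mconj {r : ℕ} (lam : Fin r → ℕ → ℕ) : Fin r → ℕ → ℕ :=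
  fun k => conjParts (lam k.rev)

/-- Dominance order on `r`-partitions:
`λ ⊵ μ` iff for every component `s` and every `j ≥ 1`,
`Σ_{t<s} |λ⁽ᵗ⁾| + Σ_{i=1}^{j} λ⁽ˢ⁾ᵢ ≥ Σ_{t<s} |μ⁽ᵗ⁾| + Σ_{i=1}^{j} μ⁽ˢ⁾ᵢ`. -/
def mDominates {r : ℕ} (lam mu : Fin r → ℕ → ℕ) : Prop :=
  ∀ (s : Fin r) (j : ℕ),
    ((∑ t ∈ Finset.univ.filter (fun t : Fin r => t < s), partSize (mu t)) +
      ∑ i ∈ Finset.range (j + 1), mu s i) ≤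
    ((∑ t ∈ Finset.univ.filter (fun t : Fin r => t < s), partSize (lam t)) +
      ∑ i ∈ Finset.range (j + 1), lam s i)

/-- The Young diagram of an `r`-partition: nodes `(i, j, k)` (all 0-indexed)
with `j < λ⁽ᵏ⁾ᵢ`. -/
def mDiagram {r : ℕ} (lam : Fin r → ℕ → ℕ) : Set (ℕ × ℕ × Fin r) :=
  {x | x.2.1 < lam x.2.2 x.1}

/-- The residue of the node `(i, j, k)` with respect to `(q, Q)` is
`q^(j-i) * Q k` (0-indexed `i, j`, which gives the same value as 1-indexing). -/
noncomputable def res {r : ℕ} {K : Type*} [Field K] (q : K) (Q : Fin r → K)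
    (x : ℕ × ℕ × Fin r) : K :=
  q ^ ((x.2.1 : ℤ) - (x.1 : ℤ)) * Q x.2.2

/-- `resCount q Q lam f = c_f(λ)`, the number of nodes of `[λ]` of residue `f`. -/
noncomputable def resCount {r : ℕ} {K : Type*} [Field K] (q : K) (Q : Fin r → K)
    (lam : Fin r → ℕ → ℕ) (f : K) : ℕ :=
  Set.ncard {x ∈ mDiagram lam | res q Q x = f}

/-- Fayers' weight of an `r`-partition:
`w(λ) = (Σ_{k} c_{Q_k}(λ)) - (1/2) Σ_{f ∈ K^×} (c_f(λ) - c_{qf}(λ))²`. -/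
noncomputable def mweight {r : ℕ} {K : Type*} [Field K] (q : K) (Q : Fin r → K)
    (lam : Fin r → ℕ → ℕ) : ℚ :=
  (∑ k : Fin r, (resCount q Q lam (Q k) : ℚ)) -
    (1 / 2) * ∑ᶠ f ∈ {f : K | f ≠ 0},
      (((resCount q Q lam f : ℤ) - (resCount q Q lam (q * f) : ℤ)) : ℚ) ^ 2

theorem lt_conjParts_iff {lam : ℕ → ℕ} (h : IsPartitionFun lam) (i j : ℕ) :
    i < conjParts lam j ↔ j < lam i := by
  obtain ⟨hm, N, hN⟩ := h
  have hex : ∃ m, lam m ≤ j := ⟨N, by rw [hN N le_rfl]; exact Nat.zero_le _⟩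
  classical
  have hset : {i : ℕ | j < lam i} = ((Finset.range (Nat.find hex) : Finset ℕ) : Set ℕ) := by
    ext x
    simp only [Set.mem_setOf_eq, Finset.coe_range, Set.mem_Iio]
    constructor
    · intro hx
      by_contra hc
      have h1 := hm (not_lt.mp hc)
      have h2 := Nat.find_spec hex
      omega
    · intro hx
      exact not_le.mp (Nat.find_min hex hx)
  have hc : conjParts lam j = Nat.find hex := by
    unfold conjParts
    rw [hset, Set.ncard_coe_finset, Finset.card_range]
  rw [hc]
  have : i ∈ {i : ℕ | j < lam i} ↔ i < Nat.find hex := by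
    rw [hset]; simp
  exact this.symm

theorem resCount_mconj {K : Type*} [Field K] (q : K) (hq0 : q ≠ 0)
    (Q : Fin 2 → K) (hQ : ∀ k, Q k ≠ 0)
    (lam : Fin 2 → ℕ → ℕ) (hlam : IsMultipartition lam) (f : K) (hf : f ≠ 0) :
    resCount q Q (mconj lam) f = resCount q Q lam (Q 0 * Q 1 / f) := by
  unfold resCount
  have key : ∀ (i j : ℕ) (k : Fin 2),
      res q Q (i, j, k) * res q Q (j, i, k.rev) = Q 0 * Q 1 := by
    intro i j k
    have h1 : q ^ ((j : ℤ) - i) * q ^ ((i : ℤ) - j) = 1 := by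
      rw [← zpow_add₀ hq0]; simp
    have h2 : Q k * Q k.rev = Q 0 * Q 1 := by
      fin_cases k
      · rfl
      · exact mul_comm _ _
    simp only [res]
    linear_combination (Q k * Q k.rev) * h1 + h2
  have hP : Q 0 * Q 1 ≠ 0 := mul_ne_zero (hQ 0) (hQ 1)
  refine Set.ncard_congr (fun x _ => (x.2.1, x.1, x.2.2.rev)) ?_ ?_ ?_
  · rintro ⟨i, j, k⟩ ⟨h1, h2⟩
    refine ⟨(lt_conjParts_iff (hlam _) j i).mp h1, ?_⟩
    have := key i j k
    rw [h2] at this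
    rw [eq_div_iff hf, ← this, mul_comm]
  · rintro ⟨i, j, k⟩ ⟨i', j', k'⟩ _ _ h
    simp only [Prod.mk.injEq, Fin.rev_inj] at h ⊢
    tauto
  · rintro ⟨i, j, k⟩ ⟨h1, h2⟩
    refine ⟨(j, i, k.rev), ⟨?_, ?_⟩, by simp⟩
    · change i < conjParts (lam k.rev.rev) j
      rw [Fin.rev_rev]
      exact (lt_conjParts_iff (hlam _) i j).mpr h1
    · have := key i j k
      rw [h2] at this
      have h3 : Q 0 * Q 1 / f ≠ 0 := div_ne_zero hP hf
      apply mul_left_cancel₀ h3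
      rw [this]; field_simp

/-- For a bipartition `λ` of `n`, `w(λ) = w(λ')`. -/
theorem weight_conj_bipartition {K : Type*} [Field K] (q : K) (hq0 : q ≠ 0) (hq1 : q ≠ 1)
    (a : Fin 2 → ℤ) (Q : Fin 2 → K) (hQ : ∀ k, Q k = q ^ a k)
    {n : ℕ} (lam : Fin 2 → ℕ → ℕ) (hlam : IsMultipartition lam) (hn : msize lam = n) :
    mweight q Q lam = mweight q Q (mconj lam) := by
  have hQ0 : ∀ k, Q k ≠ 0 := fun k => by rw [hQ k]; exact zpow_ne_zero _ hq0
  have hP : Q 0 * Q 1 ≠ 0 := mul_ne_zero (hQ0 0) (hQ0 1)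
  have hc := resCount_mconj q hq0 Q hQ0 lam hlam
  unfold mweight
  congr 1
  · rw [Fin.sum_univ_two, Fin.sum_univ_two, hc _ (hQ0 0), hc _ (hQ0 1),
      mul_div_cancel_left₀ _ (hQ0 0), mul_div_cancel_right₀ _ (hQ0 1), add_comm]
  · congr 1
    have hinv : ∀ f : K, f ≠ 0 → Q 0 * Q 1 / (q * (Q 0 * Q 1 / (q * f))) = f := by
      intro f hf
      have h0 := hQ0 0
      have h1 := hQ0 1
      field_simp
    have hne : ∀ f : K, f ≠ 0 → Q 0 * Q 1 / (q * f) ≠ 0 := fun f hf =>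
      div_ne_zero hP (mul_ne_zero hq0 hf)
    refine finsum_mem_eq_of_bijOn (fun f => Q 0 * Q 1 / (q * f)) ⟨?_, ?_, ?_⟩ ?_
    · intro f hf
      exact hne f hf
    · intro f hf g hg h
      rw [← hinv f hf, ← hinv g hg]
      exact congrArg (fun x => Q 0 * Q 1 / (q * x)) h
    · intro f hf
      exact ⟨_, hne f hf, hinv f hf⟩
    · intro f hf
      have hf' : f ≠ 0 := hf
      have e2 : Q 0 * Q 1 / (Q 0 * Q 1 / (q * f)) = q * f := by
        rw [div_div_cancel₀ hP]
      rw [hc _ (hne f hf), hc _ (mul_ne_zero hq0 (hne f hf)), hinv f hf, e2]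
      ring
end

section
/- Let λ be a bipartition. Then Σ_{f∈K^×} (c_f(λ) − c_{qf}(λ))² = Σ_{f∈K^×} (c_f(λ') − c_{qf}(λ'))², where both sums have finite support. -/
open scoped BigOperators

theorem res_swap {K : Type*} [Field K] (q : K) (hq0 : q ≠ 0) (Q : Fin 2 → K)
    (i j : ℕ) (k : Fin 2) :
    res q Q (j, i, k.rev) * res q Q (i, j, k) = Q 0 * Q 1 := by
  have h1 : q ^ ((i : ℤ) - j) * q ^ ((j : ℤ) - i) = 1 := by
    rw [← zpow_add₀ hq0]; simp
  have h2 : Q k.rev * Q k = Q 0 * Q 1 := by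
    fin_cases k
    · exact mul_comm _ _
    · rfl
  simp only [res]
  calc _ = (q ^ ((i : ℤ) - j) * q ^ ((j : ℤ) - i)) * (Q k.rev * Q k) := by ring
    _ = _ := by rw [h1, h2, one_mul]

/-- For a bipartition `λ`,
`Σ_{f∈K^×} (c_f(λ) - c_{qf}(λ))² = Σ_{f∈K^×} (c_f(λ') - c_{qf}(λ'))²`. -/
theorem sum_sq_diff_resCount_conj {K : Type*} [Field K] (q : K) (hq0 : q ≠ 0) (hq1 : q ≠ 1)
    (a : Fin 2 → ℤ) (Q : Fin 2 → K) (hQ : ∀ k, Q k = q ^ a k)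
    (lam : Fin 2 → ℕ → ℕ) (hlam : IsMultipartition lam) :
    (∑ᶠ f ∈ {f : K | f ≠ 0},
        (((resCount q Q lam f : ℤ) - (resCount q Q lam (q * f) : ℤ)) : ℤ) ^ 2) =
      ∑ᶠ f ∈ {f : K | f ≠ 0},
        (((resCount q Q (mconj lam) f : ℤ) - (resCount q Q (mconj lam) (q * f) : ℤ)) : ℤ) ^ 2 := by
  have hQ0 : ∀ k, Q k ≠ 0 := fun k => by rw [hQ]; exact zpow_ne_zero _ hq0
  have hP : Q 0 * Q 1 ≠ 0 := mul_ne_zero (hQ0 0) (hQ0 1)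
  have hinv : ∀ f : K, f ≠ 0 → Q 0 * Q 1 / (q * (Q 0 * Q 1 / (q * f))) = f := by
    intro f hf
    rw [mul_div_assoc', div_div_eq_mul_div, div_eq_iff (mul_ne_zero hq0 hP)]
    ring
  have hne : ∀ f : K, f ≠ 0 → Q 0 * Q 1 / (q * f) ≠ 0 := fun f hf =>
    div_ne_zero hP (mul_ne_zero hq0 hf)
  refine finsum_mem_eq_of_bijOn (fun f => Q 0 * Q 1 / (q * f)) ⟨?_, ?_, ?_⟩ ?_
  · intro f hf
    exact hne f hf
  · intro f hf g hg h
    simp only at h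
    rw [← hinv f hf, h, hinv g hg]
  · intro f hf
    exact ⟨_, hne f hf, hinv f hf⟩
  · intro f hf
    have hf' : f ≠ 0 := hf
    have h2 : Q 0 * Q 1 / (Q 0 * Q 1 / (q * f)) = q * f := by
      rw [div_div_cancel₀ hP]
    rw [resCount_mconj q hq0 Q hQ0 lam hlam _ (hne f hf),
      resCount_mconj q hq0 Q hQ0 lam hlam _ (mul_ne_zero hq0 (hne f hf)), hinv f hf, h2]
    ring
end

section
/- Let K be a field and q ∈ K^× an element of quantum characteristic 9 (i.e. 1 + q + ⋯ + q⁸ = 0 and 1 + q + ⋯ + q^{m−1} ≠ 0 for 1 ≤ m < 9). Set r = 4 and (Q₁, Q₂, Q₃, Q₄) = (q, q, q⁵, q²). For the 4-partition λ = ((3, 3, 2), (2, 1), (1,1,1,1,1,1), (2, 2, 1)) of 22, one has w(λ) = 1 and w(λ') = 6, where λ' is the conjugate 4-partition; in particular w(λ) ≠ w(λ'). -/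
open scoped BigOperators

def auxL (L : Fin 4 → List ℕ) : Fin 4 → ℕ → ℕ := fun k i => (L k).getD i 0

def auxD (L : Fin 4 → List ℕ) : Finset (ℕ × ℕ × Fin 4) :=
  (Finset.range 6 ×ˢ Finset.range 6 ×ˢ Finset.univ).filter
    (fun x => x.2.1 < (L x.2.2).getD x.1 0)

def auxE (x : ℕ × ℕ × Fin 4) : ℕ := (x.2.1 + 9 - x.1 + ![1, 1, 5, 2] x.2.2) % 9

def auxC (L : Fin 4 → List ℕ) (n : ℕ) : ℕ := ((auxD L).filter (fun x => auxE x = n)).card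

theorem aux_getD_bound (l : List ℕ) (h1 : l.length ≤ 6) (h2 : ∀ a ∈ l, a ≤ 6)
    (i j : ℕ) (h : j < l.getD i 0) : i < 6 ∧ j < 6 := by
  by_cases hi : i < l.length
  · rw [List.getD_eq_getElem _ _ hi] at h
    have := h2 _ (List.getElem_mem hi)
    omega
  · rw [List.getD_eq_default _ _ (by omega)] at h
    omega

theorem aux_diag (L : Fin 4 → List ℕ) (h1 : ∀ k, (L k).length ≤ 6)
    (h2 : ∀ k, ∀ a ∈ L k, a ≤ 6) : mDiagram (auxL L) = ↑(auxD L) := by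
  ext ⟨i, j, k⟩
  simp only [mDiagram, auxL, auxD, Set.mem_setOf_eq, Finset.coe_filter, Finset.mem_product,
    Finset.mem_range, Finset.mem_univ, and_true]
  constructor
  · intro h
    have := aux_getD_bound (L k) (h1 k) (h2 k) i j h
    exact ⟨this, h⟩
  · exact fun h => h.2

theorem aux_conj (l m : List ℕ) (h1 : l.length ≤ 6) (h2 : ∀ a ∈ l, a ≤ 6) (h3 : m.length ≤ 6)
    (h : ∀ j < 6, ((Finset.range 6).filter (fun i => j < l.getD i 0)).card = m.getD j 0) :
    conjParts (fun i => l.getD i 0) = fun i => m.getD i 0 := by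
  funext j
  have e : {i : ℕ | j < l.getD i 0} = ↑((Finset.range 6).filter (fun i => j < l.getD i 0)) := by
    ext i
    simp only [Set.mem_setOf_eq, Finset.coe_filter, Finset.mem_range]
    exact ⟨fun h => ⟨(aux_getD_bound l h1 h2 i j h).1, h⟩, fun h => h.2⟩
  simp only [conjParts]
  rw [e, Set.ncard_coe_finset]
  by_cases hj : j < 6
  · exact h j hj
  · rw [List.getD_eq_default m _ (by omega), Finset.card_eq_zero, Finset.filter_eq_empty_iff]
    intro i _ hi
    exact hj (aux_getD_bound l h1 h2 i j hi).2

theorem aux_weight {K : Type*} [Field K] (q : K) (ho : orderOf q = 9)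
    (Q : Fin 4 → K) (hQ : Q = ![q, q, q ^ (5 : ℕ), q ^ (2 : ℕ)])
    (L : Fin 4 → List ℕ) (h1 : ∀ k, (L k).length ≤ 6)
    (h2 : ∀ k, ∀ a ∈ L k, a ≤ 6) :
    mweight q Q (auxL L) = ((auxC L 1 + auxC L 1 + auxC L 5 + auxC L 2 : ℕ) : ℚ) -
      (1 / 2) * ((∑ n ∈ Finset.range 9,
        ((auxC L n : ℤ) - (auxC L ((n + 1) % 9) : ℤ)) ^ 2 : ℤ) : ℚ) := by
  have hq9 : q ^ 9 = 1 := ho ▸ pow_orderOf_eq_one q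
  have hq0 : q ≠ 0 := by
    rintro rfl
    simp at hq9
  have hmod : ∀ n, q ^ (n % 9) = q ^ n := fun n => by rw [← ho, pow_mod_orderOf]
  have hinj : ∀ m n, m < 9 → n < 9 → q ^ m = q ^ n → m = n := fun m n hm hn h =>
    pow_injOn_Iio_orderOf (by simpa [ho] using hm) (by simpa [ho] using hn) h
  have hres : ∀ x ∈ auxD L, res q Q x = q ^ auxE x := by
    rintro ⟨i, j, k⟩ hx
    simp only [auxD, Finset.mem_filter, Finset.mem_product, Finset.mem_range] at hx
    have hi := hx.1.1
    have hQk : Q k = q ^ ((![1, 1, 5, 2] : Fin 4 → ℕ) k) := by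
      subst hQ
      fin_cases k <;> simp
    simp only [res, auxE]
    rw [hmod, pow_add, hQk]
    congr 1
    rw [← zpow_natCast, Nat.cast_sub (by omega)]
    push_cast
    rw [show ((j : ℤ) + 9 - i) = (j - i) + 9 by ring, zpow_add₀ hq0]
    have : q ^ (9 : ℤ) = 1 := by exact_mod_cast hq9
    rw [this, mul_one]
  have hEl : ∀ x, auxE x < 9 := fun x => Nat.mod_lt _ (by norm_num)
  have hset : ∀ f, {x ∈ mDiagram (auxL L) | res q Q x = f} =
      {x | x ∈ auxD L ∧ q ^ auxE x = f} := by
    intro f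
    rw [aux_diag L h1 h2]
    ext x
    simp only [Set.mem_setOf_eq, Finset.mem_coe]
    constructor
    · rintro ⟨a, b⟩
      exact ⟨a, hres x a ▸ b⟩
    · rintro ⟨a, b⟩
      exact ⟨a, (hres x a).trans b⟩
  have hc : ∀ n < 9, resCount q Q (auxL L) (q ^ n) = auxC L n := by
    intro n hn
    rw [resCount, hset, auxC, ← Set.ncard_coe_finset]
    congr 1
    ext x
    simp only [Set.mem_setOf_eq, Finset.coe_filter]
    constructor
    · rintro ⟨a, b⟩
      exact ⟨a, hinj _ _ (hEl x) hn b⟩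
    · rintro ⟨a, b⟩
      exact ⟨a, by rw [b]⟩
  have hz : ∀ f, (∀ n, f ≠ q ^ n) → resCount q Q (auxL L) f = 0 := by
    intro f hf
    rw [resCount, hset]
    have : {x | x ∈ auxD L ∧ q ^ auxE x = f} = ∅ := by
      ext x
      simp only [Set.mem_setOf_eq, Set.mem_empty_iff_false, iff_false]
      rintro ⟨_, b⟩
      exact hf _ b.symm
    rw [this, Set.ncard_empty]
  classical
  have hfin : (∑ᶠ f ∈ {f : K | f ≠ 0},
      (((resCount q Q (auxL L) f : ℤ) - (resCount q Q (auxL L) (q * f) : ℤ)) : ℚ) ^ 2) =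
      ∑ f ∈ (Finset.range 9).image (fun n => q ^ n),
      (((resCount q Q (auxL L) f : ℤ) - (resCount q Q (auxL L) (q * f) : ℤ)) : ℚ) ^ 2 := by
    apply finsum_mem_eq_sum_of_inter_support_eq
    ext f
    simp only [Set.mem_inter_iff, Set.mem_setOf_eq, Function.mem_support, Finset.mem_coe]
    refine and_congr_left fun hs => ?_
    constructor
    · intro _
      by_contra hf
      apply hs
      have hf' : ∀ n, f ≠ q ^ n := by
        rintro n rfl
        exact hf (Finset.mem_image.2 ⟨n % 9, Finset.mem_range.2 (Nat.mod_lt _ (by norm_num)),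
          hmod n⟩)
      rw [hz f hf', hz (q * f)]
      · simp
      · intro n hn
        apply hf' (n + 8)
        have : q * f = q * q ^ (n + 8) := by
          rw [hn, ← pow_succ', pow_add q n 9 , hq9, mul_one]
        exact mul_left_cancel₀ hq0 this
    · intro h
      obtain ⟨n, _, rfl⟩ := Finset.mem_image.1 h
      exact pow_ne_zero _ hq0
  rw [mweight, hfin, Finset.sum_image]
  · congr 1
    · have e1 := hc 1 (by norm_num)
      rw [pow_one] at e1
      subst hQ
      simp [Fin.sum_univ_four, e1, hc 5, hc 2]
    · push_cast
      congr 1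
      refine Finset.sum_congr rfl fun n hn => ?_
      rw [hc n (Finset.mem_range.1 hn), ← pow_succ', ← hmod (n + 1),
        hc _ (Nat.mod_lt _ (by norm_num))]
  · intro a ha b hb h
    exact hinj a b (by simpa using ha) (by simpa using hb) h

/-- with `e = 9`, `r = 4`, `(Q₁,Q₂,Q₃,Q₄) = (q, q, q⁵, q²)` and
`λ = ((3,3,2), (2,1), (1⁶), (2,2,1))`, one has `w(λ) = 1`, `w(λ') = 6`,
and in particular `w(λ) ≠ w(λ')`. -/
theorem weight_ne_weight_conj_example {K : Type*} [Field K] (q : K) (hq0 : q ≠ 0)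
    (he : ∑ i ∈ Finset.range 9, q ^ i = 0)
    (hmin : ∀ m : ℕ, 1 ≤ m → m < 9 → ∑ i ∈ Finset.range m, q ^ i ≠ 0)
    (Q : Fin 4 → K) (hQ : Q = ![q, q, q ^ (5 : ℕ), q ^ (2 : ℕ)])
    (lam : Fin 4 → ℕ → ℕ)
    (hlamdef : lam = fun k i =>
      (![[3, 3, 2], [2, 1], [1, 1, 1, 1, 1, 1], [2, 2, 1]] k).getD i 0) :
    mweight q Q lam = 1 ∧ mweight q Q (mconj lam) = 6 ∧
      mweight q Q lam ≠ mweight q Q (mconj lam) := by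
  have hg : ∀ m, q ^ m - 1 = (∑ i ∈ Finset.range m, q ^ i) * (q - 1) := fun m =>
    (geom_sum_mul q m).symm
  have hq1 : q - 1 ≠ 0 := by
    intro h
    have hq : q = 1 := sub_eq_zero.1 h
    have h3 := hmin 3 (by norm_num) (by norm_num)
    subst hq
    simp only [one_pow, Finset.sum_const, Finset.card_range, nsmul_eq_mul, mul_one] at he h3
    apply h3
    have : ((3 : ℕ) : K) * ((3 : ℕ) : K) = 0 := by
      rw [← Nat.cast_mul]
      exact he
    exact mul_self_eq_zero.1 this
  have ho : orderOf q = 9 := by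
    rw [orderOf_eq_iff (by norm_num)]
    refine ⟨?_, ?_⟩
    · rw [← sub_eq_zero, hg, he, zero_mul]
    · intro m hm hm0 h
      rw [← sub_eq_zero, hg] at h
      exact (mul_ne_zero (hmin m hm0 hm) hq1) h
  have hl : lam = auxL ![[3, 3, 2], [2, 1], [1, 1, 1, 1, 1, 1], [2, 2, 1]] := hlamdef
  have hl' : mconj lam = auxL ![[3, 2], [6], [2, 1], [3, 3, 2]] := by
    subst hlamdef
    funext k
    fin_cases k
    · exact aux_conj [2, 2, 1] [3, 2] (by decide) (by decide) (by decide) (by decide)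
    · exact aux_conj [1, 1, 1, 1, 1, 1] [6] (by decide) (by decide) (by decide) (by decide)
    · exact aux_conj [2, 1] [2, 1] (by decide) (by decide) (by decide) (by decide)
    · exact aux_conj [3, 3, 2] [3, 3, 2] (by decide) (by decide) (by decide) (by decide)
  have w1 : mweight q Q lam = 1 := by
    rw [hl, aux_weight q ho Q hQ _ (by decide) (by decide)]
    generalize hA : auxC ![[3, 3, 2], [2, 1], [1, 1, 1, 1, 1, 1], [2, 2, 1]] = c
    have c0 : c 0 = 5 := by rw [← hA]; decide +kernel
    have c1 : c 1 = 5 := by rw [← hA]; decide +kernel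
    have c2 : c 2 = 6 := by rw [← hA]; decide +kernel
    have c3 : c 3 = 3 := by rw [← hA]; decide +kernel
    have c4 : c 4 = 1 := by rw [← hA]; decide +kernel
    have c5 : c 5 = 1 := by rw [← hA]; decide +kernel
    have c6 : c 6 = 0 := by rw [← hA]; decide +kernel
    have c7 : c 7 = 0 := by rw [← hA]; decide +kernel
    have c8 : c 8 = 1 := by rw [← hA]; decide +kernel
    norm_num [Finset.sum_range_succ, c0, c1, c2, c3, c4, c5, c6, c7, c8]
  have w2 : mweight q Q (mconj lam) = 6 := by
    rw [hl', aux_weight q ho Q hQ _ (by decide) (by decide)]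
    generalize hA : auxC ![[3, 2], [6], [2, 1], [3, 3, 2]] = c
    have c0 : c 0 = 2 := by rw [← hA]; decide +kernel
    have c1 : c 1 = 5 := by rw [← hA]; decide +kernel
    have c2 : c 2 = 4 := by rw [← hA]; decide +kernel
    have c3 : c 3 = 4 := by rw [← hA]; decide +kernel
    have c4 : c 4 = 3 := by rw [← hA]; decide +kernel
    have c5 : c 5 = 2 := by rw [← hA]; decide +kernel
    have c6 : c 6 = 2 := by rw [← hA]; decide +kernel
    have c7 : c 7 = 0 := by rw [← hA]; decide +kernel
    have c8 : c 8 = 0 := by rw [← hA]; decide +kernel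
    norm_num [Finset.sum_range_succ, c0, c1, c2, c3, c4, c5, c6, c7, c8]
  refine ⟨w1, w2, ?_⟩
  rw [w1, w2]
  norm_num
end
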